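/- Let μ be a tuple of non-negative integers (a holomorphic type) and let Γ_1, Γ_2, Γ_3 be realizable two-level graphs of type μ. If the profiles (Γ_1,Γ_2) and (Γ_2,Γ_3) are both non-empty, then the profile (Γ_1,Γ_2,Γ_3) is non-empty, i.e. there exists a realizable four-level graph Λ of type μ without horizontal edges with δ_1(Λ)≅Γ_1, δ_2(Λ)≅Γ_2 and δ_3(Λ)≅Γ_3. -/

import Mathlib

/-- An *enhanced level graph* of type `μ : Fin n → ℤ`: a finite multigraph
with vertex set `V` and edge set `E` (each edge `e` consisting of an upper
half-edge `e⁺` attached at `src e` and a lower half-edge `e⁻` attached at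
`dst e`), together with `n` labelled legs, a genus function, a level function
normalised to take values in `{0, -1, …, -L}` and an enhancement `κ` which
vanishes exactly on the horizontal edges. -/
structure ELG (n : ℕ) (μ : Fin n → ℤ) where
  V : Type
  E : Type
  fintypeV : Fintype V
  decEqV : DecidableEq V
  fintypeE : Fintype E
  decEqE : DecidableEq E
  /-- the vertex carrying the upper half-edge `e⁺` -/
  src : E → V
  /-- the vertex carrying the lower half-edge `e⁻` -/
  dst : E → V
  /-- the vertex carrying the `i`-th labelled leg -/
  legAt : Fin n → V
  genus : V → ℕ
  level : V → ℤ
  /-- the levels are `0, -1, …, -L` -/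
  L : ℕ
  level_mem : ∀ v, -(L : ℤ) ≤ level v ∧ level v ≤ 0
  level_surj : ∀ j : Fin (L + 1), ∃ v, level v = -(j : ℤ)
  level_mono : ∀ e, level (dst e) ≤ level (src e)
  /-- the enhancement `κ` -/
  kappa : E → ℕ
  kappa_zero_iff : ∀ e, kappa e = 0 ↔ level (src e) = level (dst e)

attribute [instance] ELG.fintypeV ELG.decEqV ELG.fintypeE ELG.decEqE

namespace ELG

variable {n : ℕ} {μ : Fin n → ℤ}

/-- The order function: the `i`-th leg has order `μ i`, the upper half-edge of
`e` has order `κ e - 1`, the lower one has order `-κ e - 1`.  The *degree* of a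
vertex is the sum of the orders of all legs and half-edges attached to it. -/
def deg (Γ : ELG n μ) (v : Γ.V) : ℤ :=
  (∑ i ∈ Finset.univ.filter (fun i => Γ.legAt i = v), μ i)
    + (∑ e ∈ Finset.univ.filter (fun e => Γ.src e = v), ((Γ.kappa e : ℤ) - 1))
    + (∑ e ∈ Finset.univ.filter (fun e => Γ.dst e = v), (-(Γ.kappa e : ℤ) - 1))

/-- The enhancement is *admissible* if `deg v = 2 g(v) - 2` for every vertex. -/
def Admissible (Γ : ELG n μ) : Prop :=
  ∀ v, Γ.deg v = 2 * (Γ.genus v : ℤ) - 2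

/-- Number of legs at a vertex. -/
def numLegsAt (Γ : ELG n μ) (v : Γ.V) : ℕ :=
  (Finset.univ.filter (fun i => Γ.legAt i = v)).card

/-- Number of half-edges at a vertex (a loop counts twice). -/
def numHalfEdgesAt (Γ : ELG n μ) (v : Γ.V) : ℕ :=
  (Finset.univ.filter (fun e => Γ.src e = v)).card
    + (Finset.univ.filter (fun e => Γ.dst e = v)).card

/-- Stability: `2 g(v) - 2` plus the number of legs and half-edges at `v` is
positive for every vertex `v`. -/
def Stable (Γ : ELG n μ) : Prop :=
  ∀ v, 0 < 2 * (Γ.genus v : ℤ) - 2 + (Γ.numLegsAt v : ℤ) + (Γ.numHalfEdgesAt v : ℤ)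

/-- The edge `e` connects the vertices `a` and `b` (in either direction). -/
def Connects (Γ : ELG n μ) (e : Γ.E) (a b : Γ.V) : Prop :=
  (Γ.src e = a ∧ Γ.dst e = b) ∨ (Γ.src e = b ∧ Γ.dst e = a)

/-- Adjacency via some edge. -/
def Adj (Γ : ELG n μ) (a b : Γ.V) : Prop := ∃ e, Γ.Connects e a b

/-- Connectivity of the graph. -/
def Connected (Γ : ELG n μ) : Prop :=
  Nonempty Γ.V ∧ ∀ a b : Γ.V, Relation.ReflTransGen Γ.Adj a b

/-- The total genus `g = ∑ g(v) + |E| - |V| + 1` of a connected graph. -/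
def totalGenus (Γ : ELG n μ) : ℤ :=
  (∑ v, (Γ.genus v : ℤ)) + (Fintype.card Γ.E : ℤ) - (Fintype.card Γ.V : ℤ) + 1

/-- No horizontal edges. -/
def NoHorizontal (Γ : ELG n μ) : Prop :=
  ∀ e, Γ.level (Γ.src e) ≠ Γ.level (Γ.dst e)

/-- The multiset of absolute values `b` of the *negative* orders `-b` of the
legs and half-edges at a vertex `v`. -/
def poleOrders (Γ : ELG n μ) (v : Γ.V) : Multiset ℤ :=
  ((Finset.univ.filter (fun i => Γ.legAt i = v ∧ μ i < 0)).val.map (fun i => -μ i))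
    + ((Finset.univ.filter (fun e => Γ.src e = v ∧ ((Γ.kappa e : ℤ) - 1) < 0)).val.map
        (fun e => -((Γ.kappa e : ℤ) - 1)))
    + ((Finset.univ.filter (fun e => Γ.dst e = v)).val.map (fun e => (Γ.kappa e : ℤ) + 1))

/-- A vertex is *inconvenient* if it has genus `0`, no leg or half-edge at it
has order `-1`, and among the absolute values `b₁, …, b_p` of the negative
orders at `v` there is some `bᵢ > b₁ + ⋯ + b_p - p - 1`. -/
def Inconvenient (Γ : ELG n μ) (v : Γ.V) : Prop :=
  Γ.genus v = 0 ∧ (1 : ℤ) ∉ Γ.poleOrders v ∧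
    ∃ b ∈ Γ.poleOrders v,
      (Γ.poleOrders v).sum - (Multiset.card (Γ.poleOrders v) : ℤ) - 1 < b

/-- There is a simple cycle based at `v` all of whose vertices lie on levels
`≥ ℓ(v)`. -/
def HasHighCycleAt (Γ : ELG n μ) (v : Γ.V) : Prop :=
  ∃ (m : ℕ) (hm : 2 ≤ m) (vs : Fin m → Γ.V) (es : Fin m → Γ.E),
    Function.Injective vs ∧ Function.Injective es ∧ vs ⟨0, by omega⟩ = v ∧
    (∀ k : Fin m, Γ.Connects (es k) (vs k) (vs ⟨(k.val + 1) % m, Nat.mod_lt _ (by omega)⟩)) ∧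
    (∀ k : Fin m, Γ.level v ≤ Γ.level (vs k))

/-- Realizability of a connected stable admissible enhanced level graph without
horizontal edges over a holomorphic stratum: every inconvenient vertex lies on
a simple cycle not passing below its own level. -/
def Realizable (Γ : ELG n μ) : Prop :=
  Γ.Connected ∧ Γ.Stable ∧ Γ.Admissible ∧ Γ.NoHorizontal ∧
    ∀ v, Γ.Inconvenient v → Γ.HasHighCycleAt v

/-- An isomorphism of enhanced level graphs of the same type: bijections of
vertices and edges preserving incidence, genus, level, enhancement and fixing
each labelled leg. -/
structure Iso (Γ₁ Γ₂ : ELG n μ) where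
  vEquiv : Γ₁.V ≃ Γ₂.V
  eEquiv : Γ₁.E ≃ Γ₂.E
  src_map : ∀ e, Γ₂.src (eEquiv e) = vEquiv (Γ₁.src e)
  dst_map : ∀ e, Γ₂.dst (eEquiv e) = vEquiv (Γ₁.dst e)
  leg_map : ∀ i, Γ₂.legAt i = vEquiv (Γ₁.legAt i)
  genus_map : ∀ v, Γ₂.genus (vEquiv v) = Γ₁.genus v
  level_map : ∀ v, Γ₂.level (vEquiv v) = Γ₁.level v
  kappa_map : ∀ e, Γ₂.kappa (eEquiv e) = Γ₁.kappa e

/-- The edge `e` crosses the `i`-th level passage (between levels `-(i-1)` and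
`-i`). -/
def Crosses (Γ : ELG n μ) (e : Γ.E) (i : ℕ) : Prop :=
  -(i : ℤ) + 1 ≤ Γ.level (Γ.src e) ∧ Γ.level (Γ.dst e) ≤ -(i : ℤ)

instance (Γ : ELG n μ) (e : Γ.E) (i : ℕ) : Decidable (Γ.Crosses e i) :=
  inferInstanceAs (Decidable (_ ∧ _))

/-- The set of edges contracted by the undegeneration `δ_I`: those crossing no
level passage in `I`. -/
def contractedEdges (Γ : ELG n μ) (I : Finset ℕ) : Finset Γ.E :=
  Finset.univ.filter (fun e => ∀ i ∈ I, ¬ Γ.Crosses e i)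

/-- Two vertices are related if some edge of `T` connects them. -/
def contractRel (Γ : ELG n μ) (T : Finset Γ.E) (a b : Γ.V) : Prop :=
  ∃ e ∈ T, Γ.Connects e a b

/-- Witness data exhibiting `Δ` as the undegeneration `δ_I(Γ)`: the vertices of
`Δ` are the connected components of the edges of `Γ` contracted by `δ_I`, the
edges of `Δ` are the remaining edges with their enhancements, the legs keep
their positions, the genus of a merged vertex is the sum of the genera of its
vertices plus the first Betti number of the merged component, and the level
function is induced by collapsing the contracted level passages. -/
structure UndegenData (Γ : ELG n μ) (I : Finset ℕ) (Δ : ELG n μ) where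
  vmap : Γ.V → Δ.V
  vmap_surj : Function.Surjective vmap
  fiber_eq : ∀ a b, vmap a = vmap b ↔
    Relation.EqvGen (Γ.contractRel (Γ.contractedEdges I)) a b
  eEquiv : {e : Γ.E // e ∉ Γ.contractedEdges I} ≃ Δ.E
  src_map : ∀ e, Δ.src (eEquiv e) = vmap (Γ.src e.val)
  dst_map : ∀ e, Δ.dst (eEquiv e) = vmap (Γ.dst e.val)
  kappa_map : ∀ e, Δ.kappa (eEquiv e) = Γ.kappa e.val
  leg_map : ∀ i, Δ.legAt i = vmap (Γ.legAt i)
  genus_map : ∀ w : Δ.V,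
    (Δ.genus w : ℤ) =
      (∑ v ∈ Finset.univ.filter (fun v => vmap v = w), (Γ.genus v : ℤ))
        + (((Γ.contractedEdges I).filter (fun e => vmap (Γ.src e) = w)).card : ℤ)
        - ((Finset.univ.filter (fun v : Γ.V => vmap v = w)).card : ℤ) + 1
  level_map : ∀ v, Δ.level (vmap v) =
    -(((I.filter (fun i : ℕ => Γ.level v ≤ -(i : ℤ))).card : ℤ))
  newL : Δ.L = I.card

/-- `Δ` is (isomorphic to) the undegeneration `δ_I(Γ)`. -/
def IsUndegenOf (Γ : ELG n μ) (I : Finset ℕ) (Δ : ELG n μ) : Prop :=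
  Nonempty (Γ.UndegenData I Δ)

end ELG

open ELG

/-- `Λ` is a realizable `(k+1)`-level graph (without horizontal edges) lying in
the profile `(Γ₁, …, Γ_k)`, i.e. `δ_i(Λ) ≅ Γᵢ` for all `i`. -/
def InProfile {n : ℕ} {μ : Fin n → ℤ} {k : ℕ} (Λ : ELG n μ) (Γs : Fin k → ELG n μ) : Prop :=
  Λ.Realizable ∧ Λ.L = k ∧ ∀ i : Fin k, Λ.IsUndegenOf {(i : ℕ) + 1} (Γs i)

/-- The profile `(Γ₁, …, Γ_k)` is non-empty. -/
def ProfileNonEmpty {n : ℕ} {μ : Fin n → ℤ} {k : ℕ} (Γs : Fin k → ELG n μ) : Prop :=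
  ∃ Λ : ELG n μ, InProfile Λ Γs

namespace ELG

section Glue

variable {n : ℕ} {μ : Fin n → ℤ}

/-! ### Generalities on relations -/

theorem eqvGen_eq_of_isolated {α : Type*} {r : α → α → Prop} {S : α → Prop}
    (hr : ∀ a b, r a b → ¬ S a ∧ ¬ S b) {a b : α} (h : Relation.EqvGen r a b) :
    (S a ∨ S b) → a = b := by
  induction h with
  | rel a b h => intro hs; have := hr a b h; tauto
  | refl a => intro _; rfl
  | symm a b _ ih => intro hs; exact (ih hs.symm).symm
  | trans a b c _ _ ih1 ih2 =>
    rintro (hs | hs)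
    · have h1 := ih1 (Or.inl hs)
      subst h1
      exact ih2 (Or.inl hs)
    · have h1 := ih2 (Or.inr hs)
      subst h1
      exact ih1 (Or.inr hs)

theorem reflTransGen_of_eqvGen {α : Type*} {r s : α → α → Prop}
    (hrs : ∀ a b, r a b → s a b) (hs : ∀ a b, s a b → s b a) {a b : α}
    (h : Relation.EqvGen r a b) : Relation.ReflTransGen s a b := by
  induction h with
  | rel a b h => exact .single (hrs _ _ h)
  | refl a => exact .refl
  | symm a b _ ih => 
    clear * - ih hs
    induction ih with
    | refl => exact .refl
    | tail _ h ih => exact Relation.ReflTransGen.head (hs _ _ h) ih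
  | trans a b c _ _ ih1 ih2 => exact ih1.trans ih2

theorem Connects.symm' {Γ : ELG n μ} {e : Γ.E} {a b : Γ.V} (h : Γ.Connects e a b) :
    Γ.Connects e b a := Or.symm h

/-! ### Composition of undegenerations -/

theorem mem_contracted {Γ : ELG n μ} {I : Finset ℕ} {e : Γ.E} :
    e ∈ Γ.contractedEdges I ↔ ∀ i ∈ I, ¬ Γ.Crosses e i := by
  simp [contractedEdges]

section Comp

variable {Λ Δ Θ : ELG n μ} {I : Finset ℕ} {j k : ℕ}
  (D : Λ.UndegenData I Δ) (D' : Δ.UndegenData {j} Θ) (hk : k ∈ I)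
  (h : ∀ v, Δ.level (D.vmap v) ≤ -(j : ℤ) ↔ Λ.level v ≤ -(k : ℤ))

theorem UndegenData.eq_of_contracted {e : Λ.E} (he : e ∈ Λ.contractedEdges I) :
    D.vmap (Λ.src e) = D.vmap (Λ.dst e) :=
  (D.fiber_eq _ _).2 (.rel _ _ ⟨e, he, Or.inl ⟨rfl, rfl⟩⟩)

include hk in
theorem comp_sub {e : Λ.E} (he : e ∈ Λ.contractedEdges I) :
    e ∈ Λ.contractedEdges {k} := by
  rw [mem_contracted] at he ⊢
  intro i hi
  rw [Finset.mem_singleton] at hi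
  subst hi
  exact he _ hk

include h in
theorem comp_mem (e : {e : Λ.E // e ∉ Λ.contractedEdges I}) :
    D.eEquiv e ∈ Δ.contractedEdges {j} ↔ e.1 ∈ Λ.contractedEdges {k} := by
  simp only [mem_contracted, Finset.mem_singleton, forall_eq, Crosses, D.src_map, D.dst_map]
  have h1 := h (Λ.src e.1)
  have h2 := h (Λ.dst e.1)
  constructor <;> intro hh <;> omega

include hk h in
theorem comp_fiber (a b : Λ.V) : D'.vmap (D.vmap a) = D'.vmap (D.vmap b) ↔
    Relation.EqvGen (Λ.contractRel (Λ.contractedEdges {k})) a b := by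
  have fib : ∀ a b, D.vmap a = D.vmap b →
      Relation.EqvGen (Λ.contractRel (Λ.contractedEdges {k})) a b := by
    intro a b hab
    refine Relation.EqvGen.mono ?_ _ _ ((D.fiber_eq a b).1 hab)
    rintro x y ⟨e, he, hc⟩
    exact ⟨e, comp_sub hk he, hc⟩
  constructor
  · intro hab
    rw [D'.fiber_eq] at hab
    generalize hu : D.vmap a = u at hab
    generalize hw : D.vmap b = w at hab
    induction hab generalizing a b with
    | rel u w hr =>
      obtain ⟨e, he, hc⟩ := hr
      obtain ⟨e0, rfl⟩ := D.eEquiv.surjective e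
      rw [comp_mem D h] at he
      have hE : Relation.EqvGen (Λ.contractRel (Λ.contractedEdges {k}))
          (Λ.src e0.1) (Λ.dst e0.1) := .rel _ _ ⟨e0.1, he, Or.inl ⟨rfl, rfl⟩⟩
      rcases hc with ⟨h1, h2⟩ | ⟨h1, h2⟩
      · rw [D.src_map] at h1
        rw [D.dst_map] at h2
        exact ((fib _ _ (hu.trans h1.symm)).trans _ _ _ hE).trans _ _ _ (fib _ _ (h2.trans hw.symm))
      · rw [D.src_map] at h1
        rw [D.dst_map] at h2
        exact ((fib _ _ (hu.trans h2.symm)).trans _ _ _ (hE.symm _ _)).trans _ _ _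
          (fib _ _ (h1.trans hw.symm))
    | refl u => exact fib _ _ (hu.trans hw.symm)
    | symm u w _ ih => exact (ih b a hw hu).symm _ _
    | trans u x w _ _ ih1 ih2 =>
      obtain ⟨c, hc⟩ := D.vmap_surj x
      exact (ih1 a c hu hc).trans _ _ _ (ih2 c b hc hw)
  · intro hab
    induction hab with
    | rel a b hr =>
      obtain ⟨e, he, hc⟩ := hr
      have key : D'.vmap (D.vmap (Λ.src e)) = D'.vmap (D.vmap (Λ.dst e)) := by
        by_cases hI : e ∈ Λ.contractedEdges I
        · rw [D.eq_of_contracted hI]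
        · have := (comp_mem D h ⟨e, hI⟩).2 he
          have := D'.eq_of_contracted this
          rwa [D.src_map, D.dst_map] at this
      rcases hc with ⟨rfl, rfl⟩ | ⟨rfl, rfl⟩
      · exact key
      · exact key.symm
    | refl _ => rfl
    | symm _ _ _ ih => exact ih.symm
    | trans _ _ _ _ _ ih1 ih2 => exact ih1.trans ih2

include hk h in
theorem comp_edges : Function.Bijective
    (fun e : {e : Λ.E // e ∉ Λ.contractedEdges {k}} =>
      (⟨D.eEquiv ⟨e.1, fun hh => e.2 (comp_sub hk hh)⟩,
        fun hh => e.2 ((comp_mem D h _).1 hh)⟩ :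
        {e : Δ.E // e ∉ Δ.contractedEdges {j}})) := by
  constructor
  · intro e e' hee
    have := congrArg Subtype.val hee
    have := D.eEquiv.injective this
    exact Subtype.ext (Subtype.mk.inj this)
  · rintro ⟨e, he⟩
    obtain ⟨e0, rfl⟩ := D.eEquiv.surjective e
    exact ⟨⟨e0.1, fun hh => he ((comp_mem D h _).2 hh)⟩, rfl⟩

include hk h in
theorem comp_genus (w : Θ.V) :
    (Θ.genus w : ℤ) =
      (∑ v ∈ Finset.univ.filter (fun v => D'.vmap (D.vmap v) = w), (Λ.genus v : ℤ))
        + (((Λ.contractedEdges {k}).filter (fun e => D'.vmap (D.vmap (Λ.src e)) = w)).card : ℤ)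
        - ((Finset.univ.filter (fun v : Λ.V => D'.vmap (D.vmap v) = w)).card : ℤ) + 1 := by
  classical
  rw [D'.genus_map w]
  have e1 : ∀ F : Λ.V → ℤ,
      ∑ v ∈ Finset.univ.filter (fun v => D'.vmap (D.vmap v) = w), F v =
      ∑ u ∈ Finset.univ.filter (fun u => D'.vmap u = w),
        ∑ v ∈ Finset.univ.filter (fun v => D.vmap v = u), F v := by
    intro F
    rw [← Finset.sum_fiberwise_of_maps_to (g := D.vmap)
      (t := Finset.univ.filter (fun u => D'.vmap u = w))]
    · refine Finset.sum_congr rfl fun u hu => Finset.sum_congr ?_ fun _ _ => rfl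
      ext v
      simp only [Finset.mem_filter, Finset.mem_univ, true_and] at hu ⊢
      constructor
      · exact fun hh => hh.2
      · rintro rfl; exact ⟨hu, rfl⟩
    · intro v hv
      simpa using hv
  have e2 : ((Λ.contractedEdges I).filter (fun e => D'.vmap (D.vmap (Λ.src e)) = w)).card =
      ∑ u ∈ Finset.univ.filter (fun u => D'.vmap u = w),
        ((Λ.contractedEdges I).filter (fun e => D.vmap (Λ.src e) = u)).card := by
    rw [Finset.card_eq_sum_card_fiberwise (f := fun e => D.vmap (Λ.src e))
      (t := Finset.univ.filter (fun u => D'.vmap u = w))]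
    · refine Finset.sum_congr rfl fun u hu => congrArg _ ?_
      ext v
      simp only [Finset.mem_filter, Finset.mem_univ, true_and] at hu ⊢
      constructor
      · exact fun hh => ⟨hh.1.1, hh.2⟩
      · rintro ⟨h1, rfl⟩; exact ⟨⟨h1, hu⟩, rfl⟩
    · intro v hv
      simpa using (Finset.mem_filter.1 hv).2
  have e3 : ((Λ.contractedEdges {k}).filter (fun e => D'.vmap (D.vmap (Λ.src e)) = w)).card =
      ((Λ.contractedEdges I).filter (fun e => D'.vmap (D.vmap (Λ.src e)) = w)).card +
      ((Δ.contractedEdges {j}).filter (fun e => D'.vmap (Δ.src e) = w)).card := by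
    rw [← Finset.card_filter_add_card_filter_not (s := (Λ.contractedEdges {k}).filter
      (fun e => D'.vmap (D.vmap (Λ.src e)) = w)) (fun e => e ∈ Λ.contractedEdges I)]
    congr 1
    · congr 1
      ext e
      simp only [Finset.mem_filter]
      constructor
      · exact fun hh => ⟨hh.2, hh.1.2⟩
      · exact fun hh => ⟨⟨comp_sub hk hh.1, hh.2⟩, hh.1⟩
    · refine Finset.card_bij (fun e he => D.eEquiv ⟨e, (Finset.mem_filter.1 he).2⟩) ?_ ?_ ?_
      · intro e he
        simp only [Finset.mem_filter] at he ⊢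
        exact ⟨(comp_mem D h _).2 he.1.1, by rw [D.src_map]; exact he.1.2⟩
      · intro e he e' he' hee
        exact congrArg Subtype.val (D.eEquiv.injective hee)
      · intro e he
        obtain ⟨e0, rfl⟩ := D.eEquiv.surjective e
        simp only [Finset.mem_filter, comp_mem D h, D.src_map] at he
        exact ⟨e0.1, by simp only [Finset.mem_filter]; exact ⟨he, e0.2⟩, rfl⟩
  rw [e1, e3, e2, Finset.card_eq_sum_ones (Finset.univ.filter
    (fun v : Λ.V => D'.vmap (D.vmap v) = w))]
  push_cast
  rw [e1]
  have e4 : ∀ u ∈ Finset.univ.filter (fun u => D'.vmap u = w), (Δ.genus u : ℤ) = _ :=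
    fun u _ => D.genus_map u
  rw [Finset.sum_congr rfl e4]
  simp only [Finset.sum_add_distrib, Finset.sum_sub_distrib, Finset.sum_const, nsmul_eq_mul,
    mul_one]
  ring

include D D' hk h in
theorem undegen_comp : Λ.IsUndegenOf {k} Θ := by
  refine ⟨{
    vmap := fun v => D'.vmap (D.vmap v)
    vmap_surj := D'.vmap_surj.comp D.vmap_surj
    fiber_eq := comp_fiber D D' hk h
    eEquiv := (Equiv.ofBijective _ (comp_edges D hk h)).trans D'.eEquiv
    src_map := ?_
    dst_map := ?_
    kappa_map := ?_
    leg_map := ?_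
    genus_map := comp_genus D D' hk h
    level_map := ?_
    newL := by rw [D'.newL]; simp }⟩
  · intro e
    simp [D'.src_map, D.src_map]
  · intro e
    simp [D'.dst_map, D.dst_map]
  · intro e
    simp [D'.kappa_map, D.kappa_map]
  · intro i
    rw [D'.leg_map, D.leg_map]
  · intro v
    rw [D'.level_map]
    simp only [Finset.filter_singleton, h]
    split_ifs <;> simp

end Comp

/-! ### Local data at a vertex -/

theorem local_data {Z X : ELG n μ} {z : Z.V} {a : X.V} (jX : X.E → Z.E)
    (hj : Function.Injective jX) (hk : ∀ x, Z.kappa (jX x) = X.kappa x)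
    (hl : ∀ i, Z.legAt i = z ↔ X.legAt i = a)
    (hs : ∀ e, Z.src e = z ↔ ∃ x, jX x = e ∧ X.src x = a)
    (hd : ∀ e, Z.dst e = z ↔ ∃ x, jX x = e ∧ X.dst x = a) :
    Z.deg z = X.deg a ∧ Z.numLegsAt z = X.numLegsAt a ∧
      Z.numHalfEdgesAt z = X.numHalfEdgesAt a ∧ Z.poleOrders z = X.poleOrders a := by
  have s : (Finset.univ.filter (fun e => Z.src e = z)) =
      (Finset.univ.filter (fun e => X.src e = a)).map ⟨jX, hj⟩ := by
    ext e; simp [hs, and_comm]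
  have d : (Finset.univ.filter (fun e => Z.dst e = z)) =
      (Finset.univ.filter (fun e => X.dst e = a)).map ⟨jX, hj⟩ := by
    ext e; simp [hd, and_comm]
  have s' : (Finset.univ.filter (fun e => Z.src e = z ∧ ((Z.kappa e : ℤ) - 1) < 0)) =
      (Finset.univ.filter (fun e => X.src e = a ∧ ((X.kappa e : ℤ) - 1) < 0)).map ⟨jX, hj⟩ := by
    ext e
    simp only [Finset.mem_filter, Finset.mem_univ, true_and, Finset.mem_map,
      Function.Embedding.coeFn_mk, hs]
    constructor
    · rintro ⟨⟨x, rfl, hx⟩, h2⟩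
      exact ⟨x, ⟨hx, by rwa [hk] at h2⟩, rfl⟩
    · rintro ⟨x, ⟨hx, h2⟩, rfl⟩
      exact ⟨⟨x, rfl, hx⟩, by rwa [hk]⟩
  refine ⟨?_, ?_, ?_, ?_⟩
  · simp only [deg, s, d, hl, Finset.sum_map, Function.Embedding.coeFn_mk, hk]
  · simp only [numLegsAt, hl]
  · simp only [numHalfEdgesAt, s, d, Finset.card_map]
  · simp only [poleOrders, s', d, hl, Finset.map_val, Multiset.map_map, Function.comp_def,
      Function.Embedding.coeFn_mk, hk]

/-! ### Cycles through reachability -/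

/-- Reachability using only edges satisfying `A`. -/
def StepBy (Γ : ELG n μ) (A : Γ.E → Prop) (a b : Γ.V) : Prop := ∃ e, A e ∧ Γ.Connects e a b

theorem StepBy.symm {Γ : ELG n μ} {A : Γ.E → Prop} {a b : Γ.V} (h : Γ.StepBy A a b) :
    Γ.StepBy A b a := by
  obtain ⟨e, h1, h2⟩ := h
  exact ⟨e, h1, h2.symm'⟩

theorem level_dst_of_connects {Γ : ELG n μ} {e : Γ.E} {a b : Γ.V} (h : Γ.Connects e a b)
    {l : ℤ} : l ≤ Γ.level (Γ.dst e) ↔ l ≤ Γ.level a ∧ l ≤ Γ.level b := by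
  have := Γ.level_mono e
  rcases h with ⟨rfl, rfl⟩ | ⟨rfl, rfl⟩ <;> constructor <;> intro h <;> omega

theorem cycle_to_reach {Γ : ELG n μ} {v : Γ.V} (h : Γ.HasHighCycleAt v) :
    ∃ e u, Γ.Connects e v u ∧ Γ.level v ≤ Γ.level (Γ.dst e) ∧
      Relation.ReflTransGen
        (Γ.StepBy (fun e' => e' ≠ e ∧ Γ.level v ≤ Γ.level (Γ.dst e'))) v u := by
  obtain ⟨m, hm, vs, es, hvs, hes, h0, hc, hl⟩ := h
  refine ⟨es ⟨m - 1, by omega⟩, vs ⟨m - 1, by omega⟩, ?_, ?_, ?_⟩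
  · have := hc ⟨m - 1, by omega⟩
    have e : (⟨((⟨m - 1, by omega⟩ : Fin m).val + 1) % m, Nat.mod_lt _ (by omega)⟩ : Fin m) =
        ⟨0, by omega⟩ := by
      ext; simp [Nat.sub_add_cancel (show 1 ≤ m by omega)]
    rw [e, h0] at this
    exact this.symm'
  · rw [level_dst_of_connects (hc _)]
    exact ⟨hl _, hl _⟩
  · have : ∀ k (hk : k < m), Relation.ReflTransGen
        (Γ.StepBy (fun e' => e' ≠ es ⟨m - 1, by omega⟩ ∧ Γ.level v ≤ Γ.level (Γ.dst e')))
        v (vs ⟨k, hk⟩) := by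
      intro k
      induction k with
      | zero => intro hk; rw [h0]
      | succ k ih =>
        intro hk
        refine (ih (by omega)).tail ⟨es ⟨k, by omega⟩, ⟨?_, ?_⟩, ?_⟩
        · intro hh
          have := congrArg Fin.val (hes hh)
          simp at this
          omega
        · rw [level_dst_of_connects (hc _)]
          exact ⟨hl _, hl _⟩
        · have := hc ⟨k, by omega⟩
          simp only [Nat.mod_eq_of_lt hk] at this
          exact this
    exact this _ _

theorem reach_to_cycle {Γ : ELG n μ} {v u : Γ.V} {e : Γ.E} (hne : v ≠ u)
    (hc : Γ.Connects e v u)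
    (h : Relation.ReflTransGen
        (Γ.StepBy (fun e' => e' ≠ e ∧ Γ.level v ≤ Γ.level (Γ.dst e'))) v u) :
    Γ.HasHighCycleAt v := by
  classical
  let G : SimpleGraph Γ.V := SimpleGraph.fromRel
    (Γ.StepBy (fun e' => e' ≠ e ∧ Γ.level v ≤ Γ.level (Γ.dst e')))
  have hG : ∀ a b, G.Adj a b → Γ.StepBy (fun e' => e' ≠ e ∧ Γ.level v ≤ Γ.level (Γ.dst e')) a b := by
    intro a b hab
    rw [SimpleGraph.fromRel_adj] at hab
    rcases hab.2 with h | h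
    · exact h
    · exact h.symm
  have hreach : G.Reachable v u := by
    clear hne hc
    induction h with
    | refl => exact SimpleGraph.Reachable.refl _
    | @tail b c _ hbc ih =>
      by_cases hb : b = c
      · subst hb; exact ih
      · refine ih.trans (SimpleGraph.Adj.reachable ?_)
        rw [SimpleGraph.fromRel_adj]
        exact ⟨hb, Or.inl hbc⟩
  obtain ⟨p, hp⟩ := hreach.exists_isPath
  have hlen : 0 < p.length := by
    rcases Nat.eq_zero_or_pos p.length with h0 | h0
    · exact absurd (SimpleGraph.Walk.eq_of_length_eq_zero h0) hne
    · exact h0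
  have hinj : ∀ i j, i ≤ p.length → j ≤ p.length → p.getVert i = p.getVert j → i = j :=
    fun i j hi hj hh => hp.getVert_injOn hi hj hh
  have hst : ∀ k, ∃ e', k < p.length → ((e' ≠ e ∧ Γ.level v ≤ Γ.level (Γ.dst e')) ∧
      Γ.Connects e' (p.getVert k) (p.getVert (k + 1))) := by
    intro k
    by_cases hk : k < p.length
    · obtain ⟨e', h'⟩ := hG _ _ (p.adj_getVert_succ hk)
      exact ⟨e', fun _ => h'⟩
    · exact ⟨e, fun hh => absurd hh hk⟩
  choose f hf using hst
  refine ⟨p.length + 1, by omega, fun k => p.getVert k,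
    fun k => if k.val < p.length then f k else e, ?_, ?_, ?_, ?_, ?_⟩
  · intro i j hij
    exact Fin.ext (hinj _ _ (by omega) (by omega) hij)
  · intro i j hij
    have hi := i.2
    have hj := j.2
    simp only at hij
    split_ifs at hij with h1 h2 h2
    · have c1 := (hf i h1).2
      have c2 := (hf j h2).2
      rw [hij] at c1
      apply Fin.ext
      rcases c1 with ⟨a1, a2⟩ | ⟨a1, a2⟩ <;> rcases c2 with ⟨b1, b2⟩ | ⟨b1, b2⟩
      · exact hinj _ _ (by omega) (by omega) (a1.symm.trans b1)
      · have q1 := hinj _ _ (by omega) (by omega) (a1.symm.trans b1)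
        have q2 := hinj _ _ (by omega) (by omega) (a2.symm.trans b2)
        omega
      · have q1 := hinj _ _ (by omega) (by omega) (a1.symm.trans b1)
        have q2 := hinj _ _ (by omega) (by omega) (a2.symm.trans b2)
        omega
      · exact hinj _ _ (by omega) (by omega) (a2.symm.trans b2)
    · exact absurd hij (hf i h1).1.1
    · exact absurd hij.symm (hf j h2).1.1
    · apply Fin.ext; omega
  · simp
  · intro k
    have hk := k.2
    by_cases h1 : k.val < p.length
    · simp only [if_pos h1]
      rw [Nat.mod_eq_of_lt (by omega)]
      exact (hf k h1).2
    · have h2 : k.val = p.length := by omega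
      simp only [h2, lt_irrefl, if_false, Nat.mod_self]
      simpa using hc.symm'
  · intro k
    have hk := k.2
    by_cases h1 : k.val < p.length
    · exact ((level_dst_of_connects (hf k h1).2).1 (hf k h1).1.2).1
    · have h2 : k.val = (p.length - 1) + 1 := by omega
      simp only [h2]
      exact ((level_dst_of_connects (hf (p.length - 1) (by omega)).2).1
        (hf (p.length - 1) (by omega)).1.2).2

/-- Lifting of reachability along a map of graphs with connected fibres. -/
theorem lift_reach {Z X : ELG n μ} (f : Z.V → X.V)
    {A : X.E → Prop} {B : Z.E → Prop} {good : X.V → Prop}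
    (hfib : ∀ a b, f a = f b → good (f a) → Relation.ReflTransGen (Z.StepBy B) a b)
    (hedge : ∀ x, A x → ∃ e, B e ∧ f (Z.src e) = X.src x ∧ f (Z.dst e) = X.dst x)
    (hgood : ∀ x, A x → good (X.src x) ∧ good (X.dst x))
    {u w : X.V} (hu : good u) (h : Relation.ReflTransGen (X.StepBy A) u w) :
    ∀ a b, f a = u → f b = w → Relation.ReflTransGen (Z.StepBy B) a b := by
  induction h with
  | refl =>
    rintro a b rfl hb
    exact hfib _ _ hb.symm hu
  | @tail x y _ hxy ih =>
    intro a b ha hb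
    obtain ⟨e, hA, hc⟩ := hxy
    obtain ⟨e', hB, hs, hd⟩ := hedge e hA
    obtain ⟨gs, gd⟩ := hgood e hA
    rcases hc with ⟨rfl, rfl⟩ | ⟨rfl, rfl⟩
    · refine ((ih a (Z.src e') ha hs).tail ⟨e', hB, Or.inl ⟨rfl, rfl⟩⟩).trans
        (hfib _ _ (hd.trans hb.symm) ?_)
      rwa [hd]
    · refine ((ih a (Z.dst e') ha hd).tail ⟨e', hB, Or.inr ⟨rfl, rfl⟩⟩).trans
        (hfib _ _ (hs.trans hb.symm) ?_)
      rwa [hs]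

/-! ### Abstract gluing -/

/-- `Z` is obtained by gluing degenerations `X` and `Y` of `Γ`, where `X` only degenerates the
vertices satisfying `P` and `Y` only those not satisfying `P`. -/
structure GlueData (Z X Y Γ : ELG n μ) (I J : Finset ℕ) (P : Γ.V → Prop) where
  DX : X.UndegenData I Γ
  DY : Y.UndegenData J Γ
  p : Z.V → X.V
  q : Z.V → Y.V
  comm : ∀ z, DX.vmap (p z) = DY.vmap (q z)
  pb : ∀ a b, DX.vmap a = DY.vmap b → ∃ z, p z = a ∧ q z = b
  ext : ∀ z z', p z = p z' → q z = q z' → z = z'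
  injX : ∀ a a', ¬ P (DX.vmap a) → DX.vmap a = DX.vmap a' → a = a'
  injY : ∀ b b', P (DY.vmap b) → DY.vmap b = DY.vmap b' → b = b'
  cX : ∀ x ∈ X.contractedEdges I, P (DX.vmap (X.src x))
  cY : ∀ y ∈ Y.contractedEdges J, ¬ P (DY.vmap (Y.src y))
  jX : X.E → Z.E
  jY : Y.E → Z.E
  jX_inj : Function.Injective jX
  jY_inj : Function.Injective jY
  kX : ∀ x, Z.kappa (jX x) = X.kappa x
  kY : ∀ y, Z.kappa (jY y) = Y.kappa y
  srcX : ∀ x, p (Z.src (jX x)) = X.src x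
  srcY : ∀ y, q (Z.src (jY y)) = Y.src y
  dstX : ∀ x, p (Z.dst (jX x)) = X.dst x
  dstY : ∀ y, q (Z.dst (jY y)) = Y.dst y
  cover1 : ∀ e, (∃ x, jX x = e) ∨ (∃ y ∈ Y.contractedEdges J, jY y = e)
  cover2 : ∀ e, (∃ y, jY y = e) ∨ (∃ x ∈ X.contractedEdges I, jX x = e)
  disj1 : ∀ x, ∀ y ∈ Y.contractedEdges J, jX x ≠ jY y
  disj2 : ∀ y, ∀ x ∈ X.contractedEdges I, jY y ≠ jX x
  legX : ∀ i, p (Z.legAt i) = X.legAt i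
  legY : ∀ i, q (Z.legAt i) = Y.legAt i
  genP : ∀ z, P (DX.vmap (p z)) → Z.genus z = X.genus (p z)
  genN : ∀ z, ¬ P (DX.vmap (p z)) → Z.genus z = Y.genus (q z)

namespace GlueData

variable {Z X Y Γ : ELG n μ} {I J K : Finset ℕ} {P : Γ.V → Prop}

/-- Exchange the roles of the two degenerations. -/
def symm (G : GlueData Z X Y Γ I J P) : GlueData Z Y X Γ J I (fun w => ¬ P w) where
  DX := G.DY
  DY := G.DX
  p := G.q
  q := G.p
  comm := fun z => (G.comm z).symm
  pb := fun a b h => by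
    obtain ⟨z, h1, h2⟩ := G.pb b a h.symm
    exact ⟨z, h2, h1⟩
  ext := fun z z' h1 h2 => G.ext z z' h2 h1
  injX := fun a a' h => G.injY a a' (not_not.1 h)
  injY := G.injX
  cX := G.cY
  cY := fun y hy => not_not.2 (G.cX y hy)
  jX := G.jY
  jY := G.jX
  jX_inj := G.jY_inj
  jY_inj := G.jX_inj
  kX := G.kY
  kY := G.kX
  srcX := G.srcY
  srcY := G.srcX
  dstX := G.dstY
  dstY := G.dstX
  cover1 := G.cover2
  cover2 := G.cover1
  disj1 := G.disj2
  disj2 := G.disj1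
  legX := G.legY
  legY := G.legX
  genP := fun z h => G.genN z (by rw [G.comm]; exact h)
  genN := fun z h => G.genP z (by rw [G.comm]; exact not_not.1 h)

variable (G : GlueData Z X Y Γ I J P)

theorem eq_of_p {z z' : Z.V} (hP : P (G.DX.vmap (G.p z))) (h : G.p z = G.p z') : z = z' := by
  refine G.ext _ _ h (G.injY _ _ ?_ ?_)
  · rwa [← G.comm]
  · rw [← G.comm, ← G.comm, h]

theorem cY_dst {y : Y.E} (hy : y ∈ Y.contractedEdges J) : ¬ P (G.DY.vmap (Y.dst y)) := by
  rw [← G.DY.eq_of_contracted hy]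
  exact G.cY y hy

theorem local_eq (z : Z.V) (hP : P (G.DX.vmap (G.p z))) :
    Z.deg z = X.deg (G.p z) ∧ Z.numLegsAt z = X.numLegsAt (G.p z) ∧
      Z.numHalfEdgesAt z = X.numHalfEdgesAt (G.p z) ∧
      Z.poleOrders z = X.poleOrders (G.p z) := by
  refine local_data G.jX G.jX_inj G.kX ?_ ?_ ?_
  · intro i
    rw [← G.legX]
    exact ⟨fun h => by rw [h], fun h => (G.eq_of_p hP h.symm).symm⟩
  · intro e
    constructor
    · intro h
      rcases G.cover1 e with ⟨x, rfl⟩ | ⟨y, hy, rfl⟩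
      · exact ⟨x, rfl, by rw [← G.srcX, h]⟩
      · exfalso
        rw [G.comm, ← h, G.srcY] at hP
        exact G.cY y hy hP
    · rintro ⟨x, rfl, hx⟩
      exact (G.eq_of_p hP (by rw [G.srcX, hx])).symm
  · intro e
    constructor
    · intro h
      rcases G.cover1 e with ⟨x, rfl⟩ | ⟨y, hy, rfl⟩
      · exact ⟨x, rfl, by rw [← G.dstX, h]⟩
      · exfalso
        rw [G.comm, ← h, G.dstY] at hP
        exact G.cY_dst hy hP
    · rintro ⟨x, rfl, hx⟩
      exact (G.eq_of_p hP (by rw [G.dstX, hx])).symm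

theorem p_surj : Function.Surjective G.p := by
  intro a
  obtain ⟨b, hb⟩ := G.DY.vmap_surj (G.DX.vmap a)
  obtain ⟨z, h1, _⟩ := G.pb a b hb.symm
  exact ⟨z, h1⟩

variable (hK : ∀ e, e ∈ Z.contractedEdges K ↔ ∃ y ∈ Y.contractedEdges J, G.jY y = e)

theorem p_eq_of_q {y : Y.E} (hy : y ∈ Y.contractedEdges J) :
    G.p (Z.src (G.jY y)) = G.p (Z.dst (G.jY y)) := by
  refine G.injX _ _ ?_ ?_
  · rw [G.comm, G.srcY]; exact G.cY y hy
  · rw [G.comm, G.comm, G.srcY, G.dstY, G.DY.eq_of_contracted hy]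

include hK in
theorem fiber (a b : Z.V) : G.p a = G.p b ↔
    Relation.EqvGen (Z.contractRel (Z.contractedEdges K)) a b := by
  constructor
  · intro hab
    by_cases hP : P (G.DX.vmap (G.p a))
    · rw [G.eq_of_p hP hab]; exact .refl _
    · have h1 : G.DY.vmap (G.q a) = G.DY.vmap (G.q b) := by rw [← G.comm, ← G.comm, hab]
      rw [G.DY.fiber_eq] at h1
      generalize hu : G.q a = u at h1
      generalize hw : G.q b = w at h1
      induction h1 generalizing a b with
      | rel u w hr =>
        obtain ⟨y, hy, hc⟩ := hr
        have hyK := (hK (G.jY y)).2 ⟨y, hy, rfl⟩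
        have hE := G.p_eq_of_q hy
        have hPa := hP
        rw [G.comm, hu] at hPa
        rcases hc with ⟨h1, h2⟩ | ⟨h1, h2⟩
        · have ea : a = Z.src (G.jY y) := by
            refine G.ext _ _ (G.injX _ _ hP ?_) ?_
            · rw [G.comm, G.comm, G.srcY, h1, hu]
            · rw [G.srcY, h1, hu]
          have eb : b = Z.dst (G.jY y) := by
            refine G.ext _ _ ?_ ?_
            · rw [← hab, ea, hE]
            · rw [G.dstY, h2, hw]
          exact .rel _ _ ⟨_, hyK, Or.inl ⟨ea.symm, eb.symm⟩⟩
        · have ea : a = Z.dst (G.jY y) := by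
            refine G.ext _ _ (G.injX _ _ hP ?_) ?_
            · rw [G.comm, G.comm, G.dstY, h2, hu]
            · rw [G.dstY, h2, hu]
          have eb : b = Z.src (G.jY y) := by
            refine G.ext _ _ ?_ ?_
            · rw [← hab, ea, hE]
            · rw [G.srcY, h1, hw]
          exact .rel _ _ ⟨_, hyK, Or.inr ⟨eb.symm, ea.symm⟩⟩
      | refl u => rw [G.ext a b hab (hu.trans hw.symm)]; exact .refl _
      | symm u w _ ih =>
        exact (ih b a hab.symm (by rwa [← hab]) hw hu).symm _ _
      | trans u x w hux _ ih1 ih2 =>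
        have e1 : G.DX.vmap (G.p a) = G.DY.vmap x := by
          rw [G.comm, hu]; exact (G.DY.fiber_eq _ _).2 hux
        obtain ⟨c, hc1, hc2⟩ := G.pb (G.p a) x e1
        exact (ih1 a c hc1.symm hP hu hc2).trans _ _ _
          (ih2 c b (hc1.trans hab) (by rwa [hc1]) hc2 hw)
  · intro hab
    induction hab with
    | rel a b hr =>
      obtain ⟨e, he, hc⟩ := hr
      obtain ⟨y, hy, rfl⟩ := (hK e).1 he
      have hE := G.p_eq_of_q hy
      rcases hc with ⟨rfl, rfl⟩ | ⟨rfl, rfl⟩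
      · exact hE
      · exact hE.symm
    | refl _ => rfl
    | symm _ _ _ ih => exact ih.symm
    | trans _ _ _ _ _ ih1 ih2 => exact ih1.trans ih2

theorem genus_iso (w : X.V) (hw : ¬ P (G.DX.vmap w)) : X.genus w = Γ.genus (G.DX.vmap w) := by
  have := G.DX.genus_map (G.DX.vmap w)
  have e1 : Finset.univ.filter (fun v => G.DX.vmap v = G.DX.vmap w) = {w} := by
    ext v
    simp only [Finset.mem_filter, Finset.mem_univ, true_and, Finset.mem_singleton]
    exact ⟨fun h => (G.injX _ _ hw h.symm).symm, fun h => by rw [h]⟩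
  have e2 : (X.contractedEdges I).filter (fun e => G.DX.vmap (X.src e) = G.DX.vmap w) = ∅ := by
    rw [Finset.filter_eq_empty_iff]
    intro e he hh
    exact hw (hh ▸ G.cX e he)
  rw [e1, e2] at this
  simp at this
  omega

include hK in
theorem genus_glue (w : X.V) :
    (X.genus w : ℤ) =
      (∑ v ∈ Finset.univ.filter (fun v => G.p v = w), (Z.genus v : ℤ))
        + (((Z.contractedEdges K).filter (fun e => G.p (Z.src e) = w)).card : ℤ)
        - ((Finset.univ.filter (fun v : Z.V => G.p v = w)).card : ℤ) + 1 := by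
  by_cases hP : P (G.DX.vmap w)
  · obtain ⟨z, rfl⟩ := G.p_surj w
    have e1 : Finset.univ.filter (fun v => G.p v = G.p z) = {z} := by
      ext v
      simp only [Finset.mem_filter, Finset.mem_univ, true_and, Finset.mem_singleton]
      exact ⟨fun h => (G.eq_of_p hP h.symm).symm, fun h => by rw [h]⟩
    have e2 : (Z.contractedEdges K).filter (fun e => G.p (Z.src e) = G.p z) = ∅ := by
      rw [Finset.filter_eq_empty_iff]
      intro e he hh
      obtain ⟨y, hy, rfl⟩ := (hK e).1 he
      rw [← hh, G.comm, G.srcY] at hP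
      exact G.cY y hy hP
    rw [e1, e2]
    simp [G.genP z hP]
  · rw [G.genus_iso w hP, G.DY.genus_map]
    have bij : ∀ b, G.DY.vmap b = G.DX.vmap w → ∃ z, G.p z = w ∧ G.q z = b :=
      fun b hb => G.pb w b hb.symm
    have e1 : ∑ v ∈ Finset.univ.filter (fun v => G.p v = w), (Z.genus v : ℤ) =
        ∑ v ∈ Finset.univ.filter (fun v => G.DY.vmap v = G.DX.vmap w), (Y.genus v : ℤ) := by
      refine Finset.sum_bij (fun z _ => G.q z) ?_ ?_ ?_ ?_
      · intro z hz
        simp only [Finset.mem_filter, Finset.mem_univ, true_and] at hz ⊢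
        rw [← G.comm, hz]
      · intro z hz z' hz' hh
        simp only [Finset.mem_filter, Finset.mem_univ, true_and] at hz hz'
        exact G.ext _ _ (hz.trans hz'.symm) hh
      · intro b hb
        simp only [Finset.mem_filter, Finset.mem_univ, true_and] at hb
        obtain ⟨z, h1, h2⟩ := bij b hb
        exact ⟨z, by simpa using h1, h2⟩
      · intro z hz
        simp only [Finset.mem_filter, Finset.mem_univ, true_and] at hz
        rw [G.genN z (by rwa [hz])]
    have e2 : (Finset.univ.filter (fun v : Z.V => G.p v = w)).card =
        (Finset.univ.filter (fun v => G.DY.vmap v = G.DX.vmap w)).card := by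
      refine Finset.card_bij (fun z _ => G.q z) ?_ ?_ ?_
      · intro z hz
        simp only [Finset.mem_filter, Finset.mem_univ, true_and] at hz ⊢
        rw [← G.comm, hz]
      · intro z hz z' hz' hh
        simp only [Finset.mem_filter, Finset.mem_univ, true_and] at hz hz'
        exact G.ext _ _ (hz.trans hz'.symm) hh
      · intro b hb
        simp only [Finset.mem_filter, Finset.mem_univ, true_and] at hb
        obtain ⟨z, h1, h2⟩ := bij b hb
        exact ⟨z, by simpa using h1, h2⟩
    have e3 : ((Y.contractedEdges J).filter (fun e => G.DY.vmap (Y.src e) = G.DX.vmap w)).card =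
        ((Z.contractedEdges K).filter (fun e => G.p (Z.src e) = w)).card := by
      refine Finset.card_bij (fun y _ => G.jY y) ?_ ?_ ?_
      · intro y hy
        simp only [Finset.mem_filter] at hy ⊢
        refine ⟨(hK _).2 ⟨y, hy.1, rfl⟩, (G.injX _ _ hP ?_).symm⟩
        rw [G.comm, G.srcY, hy.2]
      · intro y _ y' _ hh
        exact G.jY_inj hh
      · intro e he
        simp only [Finset.mem_filter] at he
        obtain ⟨y, hy, rfl⟩ := (hK e).1 he.1
        refine ⟨y, ?_, rfl⟩
        simp only [Finset.mem_filter]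
        exact ⟨hy, by rw [← G.srcY, ← G.comm, he.2]⟩
    rw [e1, e2, e3]

include hK in
theorem edges_bij : Function.Bijective (fun x : X.E =>
    (⟨G.jX x, fun hh => by
      obtain ⟨y, hy, h⟩ := (hK _).1 hh
      exact G.disj1 x y hy h.symm⟩ : {e : Z.E // e ∉ Z.contractedEdges K})) := by
  constructor
  · intro x x' h
    exact G.jX_inj (Subtype.mk.inj h)
  · rintro ⟨e, he⟩
    rcases G.cover1 e with ⟨x, rfl⟩ | ⟨y, hy, rfl⟩
    · exact ⟨x, rfl⟩
    · exact absurd ((hK _).2 ⟨y, hy, rfl⟩) he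

/-- The glued graph undegenerates to each of the two pieces. -/
noncomputable def undegen
    (hlev : ∀ v, X.level (G.p v) = -(((K.filter (fun i : ℕ => Z.level v ≤ -(i : ℤ))).card : ℤ)))
    (hL : X.L = K.card) : Z.UndegenData K X where
  vmap := G.p
  vmap_surj := G.p_surj
  fiber_eq := G.fiber hK
  eEquiv := (Equiv.ofBijective _ (G.edges_bij hK)).symm
  src_map := fun e => by
    obtain ⟨x, rfl⟩ := (Equiv.ofBijective _ (G.edges_bij hK)).surjective e
    rw [Equiv.symm_apply_apply]
    exact (G.srcX x).symm
  dst_map := fun e => by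
    obtain ⟨x, rfl⟩ := (Equiv.ofBijective _ (G.edges_bij hK)).surjective e
    rw [Equiv.symm_apply_apply]
    exact (G.dstX x).symm
  kappa_map := fun e => by
    obtain ⟨x, rfl⟩ := (Equiv.ofBijective _ (G.edges_bij hK)).surjective e
    rw [Equiv.symm_apply_apply]
    exact (G.kX x).symm
  leg_map := fun i => (G.legX i).symm
  genus_map := G.genus_glue hK
  level_map := hlev
  newL := hL

end GlueData

/-! ### The concrete gluing of two three-level graphs -/

/-- Two three-level graphs with a common undegeneration. -/
structure GPair (X Y Γ : ELG n μ) where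
  hX : X.L = 2
  hY : Y.L = 2
  nX : X.NoHorizontal
  nY : Y.NoHorizontal
  DX : X.UndegenData {2} Γ
  DY : Y.UndegenData {1} Γ

namespace GPair

variable {X Y Γ : ELG n μ} (S : GPair X Y Γ)

include S in
theorem lX (a : X.V) : -2 ≤ X.level a ∧ X.level a ≤ 0 := by
  have := X.level_mem a
  rw [S.hX] at this
  exact_mod_cast this

include S in
theorem lY (a : Y.V) : -2 ≤ Y.level a ∧ Y.level a ≤ 0 := by
  have := Y.level_mem a
  rw [S.hY] at this
  exact_mod_cast this

theorem fX (a : X.V) : (X.level a = -2 ∧ Γ.level (S.DX.vmap a) = -1) ∨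
    (-1 ≤ X.level a ∧ Γ.level (S.DX.vmap a) = 0) := by
  have h1 := S.lX a
  have h2 := S.DX.level_map a
  rw [Finset.filter_singleton] at h2
  split_ifs at h2 with h3
  · left; simp at h2 h3; omega
  · right; simp at h2 h3; omega

theorem fY (b : Y.V) : (Y.level b ≤ -1 ∧ Γ.level (S.DY.vmap b) = -1) ∨
    (Y.level b = 0 ∧ Γ.level (S.DY.vmap b) = 0) := by
  have h1 := S.lY b
  have h2 := S.DY.level_map b
  rw [Finset.filter_singleton] at h2
  split_ifs at h2 with h3
  · left; simp at h2 h3; omega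
  · right; simp at h2 h3; omega

include S in
theorem dX (x : X.E) : X.level (X.dst x) < X.level (X.src x) :=
  lt_of_le_of_ne (X.level_mono x) (S.nX x).symm

include S in
theorem dY (x : Y.E) : Y.level (Y.dst x) < Y.level (Y.src x) :=
  lt_of_le_of_ne (Y.level_mono x) (S.nY x).symm

include S in
theorem mX (x : X.E) : x ∈ X.contractedEdges {2} ↔ -1 ≤ X.level (X.dst x) := by
  have h1 := S.dX x
  have h2 := S.lX (X.src x)
  have h3 := S.lX (X.dst x)
  simp only [mem_contracted, Finset.mem_singleton, forall_eq, Crosses]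
  push_cast
  constructor <;> intro h <;> omega

include S in
theorem mY (x : Y.E) : x ∈ Y.contractedEdges {1} ↔ Y.level (Y.src x) ≤ -1 := by
  have h1 := S.dY x
  have h2 := S.lY (Y.src x)
  simp only [mem_contracted, Finset.mem_singleton, forall_eq, Crosses]
  push_cast
  constructor <;> intro h <;> omega

theorem injX (a a' : X.V) (h : ¬ Γ.level (S.DX.vmap a) = 0)
    (haa : S.DX.vmap a = S.DX.vmap a') : a = a' := by
  refine eqvGen_eq_of_isolated (S := fun a => X.level a = -2) ?_ ((S.DX.fiber_eq _ _).1 haa)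
    (Or.inl ?_)
  · rintro u w ⟨x, hx, hc⟩
    rw [S.mX] at hx
    have := (level_dst_of_connects hc).1 hx
    omega
  · have := S.fX a
    omega

theorem injY (a a' : Y.V) (h : Γ.level (S.DY.vmap a) = 0)
    (haa : S.DY.vmap a = S.DY.vmap a') : a = a' := by
  refine eqvGen_eq_of_isolated (S := fun a => Y.level a = 0) ?_ ((S.DY.fiber_eq _ _).1 haa)
    (Or.inl ?_)
  · rintro u w ⟨x, hx, hc⟩
    rw [S.mY] at hx
    have := S.dY x
    rcases hc with ⟨rfl, rfl⟩ | ⟨rfl, rfl⟩ <;> omega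
  · have := S.fY a
    omega

/-- Vertices of the glued graph: the fibre product. -/
abbrev GV : Type := {ab : X.V × Y.V // S.DX.vmap ab.1 = S.DY.vmap ab.2}

/-- Edges of the glued graph. -/
abbrev GE (_S : GPair X Y Γ) : Type := {x : X.E // x ∈ X.contractedEdges {2}} ⊕
  ({y : Y.E // y ∈ Y.contractedEdges {1}} ⊕ Γ.E)

/-- A vertex over a given vertex of `X`. -/
noncomputable def overX (a : X.V) : S.GV :=
  ⟨(a, (S.DY.vmap_surj (S.DX.vmap a)).choose), (S.DY.vmap_surj (S.DX.vmap a)).choose_spec.symm⟩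

/-- A vertex over a given vertex of `Y`. -/
noncomputable def overY (b : Y.V) : S.GV :=
  ⟨((S.DX.vmap_surj (S.DY.vmap b)).choose, b), (S.DX.vmap_surj (S.DY.vmap b)).choose_spec⟩

theorem src_compat (c : Γ.E) : S.DX.vmap (X.src (S.DX.eEquiv.symm c).1) =
    S.DY.vmap (Y.src (S.DY.eEquiv.symm c).1) := by
  rw [← S.DX.src_map, ← S.DY.src_map, Equiv.apply_symm_apply, Equiv.apply_symm_apply]

theorem dst_compat (c : Γ.E) : S.DX.vmap (X.dst (S.DX.eEquiv.symm c).1) =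
    S.DY.vmap (Y.dst (S.DY.eEquiv.symm c).1) := by
  rw [← S.DX.dst_map, ← S.DY.dst_map, Equiv.apply_symm_apply, Equiv.apply_symm_apply]

/-- Upper ends. -/
noncomputable def gsrc : S.GE → S.GV
  | Sum.inl x => S.overX (X.src x.1)
  | Sum.inr (Sum.inl y) => S.overY (Y.src y.1)
  | Sum.inr (Sum.inr c) => ⟨(X.src (S.DX.eEquiv.symm c).1, Y.src (S.DY.eEquiv.symm c).1),
      S.src_compat c⟩

/-- Lower ends. -/
noncomputable def gdst : S.GE → S.GV
  | Sum.inl x => S.overX (X.dst x.1)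
  | Sum.inr (Sum.inl y) => S.overY (Y.dst y.1)
  | Sum.inr (Sum.inr c) => ⟨(X.dst (S.DX.eEquiv.symm c).1, Y.dst (S.DY.eEquiv.symm c).1),
      S.dst_compat c⟩

/-- Enhancement. -/
def gkappa : S.GE → ℕ
  | Sum.inl x => X.kappa x.1
  | Sum.inr (Sum.inl y) => Y.kappa y.1
  | Sum.inr (Sum.inr c) => Γ.kappa c

/-- Level function. -/
def glevel (z : S.GV) : ℤ := X.level z.1.1 + Y.level z.1.2 - Γ.level (S.DX.vmap z.1.1)

theorem glevel_cases (z : S.GV) :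
    (-1 ≤ X.level z.1.1 ∧ Y.level z.1.2 = 0 ∧ Γ.level (S.DX.vmap z.1.1) = 0 ∧
      S.glevel z = X.level z.1.1) ∨
    (X.level z.1.1 = -2 ∧ Y.level z.1.2 ≤ -1 ∧ Γ.level (S.DX.vmap z.1.1) = -1 ∧
      S.glevel z = Y.level z.1.2 - 1) := by
  have h1 := S.fX z.1.1
  have h2 := S.fY z.1.2
  have h3 := z.2
  rw [← h3] at h2
  unfold glevel
  omega

theorem gcross (e : S.GE) : S.glevel (S.gdst e) < S.glevel (S.gsrc e) := by
  have h1 := S.glevel_cases (S.gdst e)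
  have h2 := S.glevel_cases (S.gsrc e)
  rcases e with x | y | c
  · have h3 := S.dX x.1
    have h4 := (S.mX x.1).1 x.2
    simp only [gsrc, gdst, overX] at h1 h2 ⊢
    omega
  · have h3 := S.dY y.1
    have h4 := (S.mY y.1).1 y.2
    simp only [gsrc, gdst, overY] at h1 h2 ⊢
    omega
  · have h3 := S.dX (S.DX.eEquiv.symm c).1
    have h4 := S.dY (S.DY.eEquiv.symm c).1
    simp only [gsrc, gdst] at h1 h2 ⊢
    omega

theorem gkappa_ne (e : S.GE) : S.gkappa e ≠ 0 := by
  rcases e with x | y | c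
  · exact fun h => S.nX _ ((X.kappa_zero_iff _).1 h)
  · exact fun h => S.nY _ ((Y.kappa_zero_iff _).1 h)
  · intro h
    refine S.nX (S.DX.eEquiv.symm c).1 ((X.kappa_zero_iff _).1 ?_)
    rw [← S.DX.kappa_map, Equiv.apply_symm_apply]
    exact h

theorem glevel_surj (j : Fin 4) : ∃ z, S.glevel z = -(j : ℤ) := by
  have hj := j.2
  by_cases h : j.val ≤ 1
  · obtain ⟨a, ha⟩ := X.level_surj ⟨j.val, by have := S.hX; omega⟩
    refine ⟨S.overX a, ?_⟩
    have := S.glevel_cases (S.overX a)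
    simp only [overX] at this ⊢ ha
    omega
  · obtain ⟨b, hb⟩ := Y.level_surj ⟨j.val - 1, by have := S.hY; omega⟩
    refine ⟨S.overY b, ?_⟩
    have := S.glevel_cases (S.overY b)
    simp only [overY] at this ⊢ hb
    omega

/-- The glued graph. -/
noncomputable def Z : ELG n μ where
  V := S.GV
  E := S.GE
  fintypeV := inferInstanceAs
    (Fintype {ab : X.V × Y.V // S.DX.vmap ab.1 = S.DY.vmap ab.2})
  decEqV := Classical.decEq _
  fintypeE := inferInstanceAs (Fintype ({x : X.E // x ∈ X.contractedEdges {2}} ⊕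
    ({y : Y.E // y ∈ Y.contractedEdges {1}} ⊕ Γ.E)))
  decEqE := Classical.decEq _
  src := S.gsrc
  dst := S.gdst
  legAt := fun i => ⟨(X.legAt i, Y.legAt i), by rw [← S.DX.leg_map, ← S.DY.leg_map]⟩
  genus := fun z => if Γ.level (S.DX.vmap z.1.1) = 0 then X.genus z.1.1 else Y.genus z.1.2
  level := S.glevel
  L := 3
  level_mem := fun z => by
    have h1 := S.glevel_cases z
    have h2 := S.lX z.1.1
    have h3 := S.lY z.1.2
    push_cast
    omega
  level_surj := S.glevel_surj
  level_mono := fun e => (S.gcross e).le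
  kappa := S.gkappa
  kappa_zero_iff := fun e =>
    ⟨fun h => absurd h (S.gkappa_ne e), fun h => absurd h (S.gcross e).ne'⟩

/-- Edges of `X` in the glued graph. -/
noncomputable def jX (x : X.E) : S.GE :=
  if h : x ∈ X.contractedEdges {2} then Sum.inl ⟨x, h⟩
  else Sum.inr (Sum.inr (S.DX.eEquiv ⟨x, h⟩))

/-- Edges of `Y` in the glued graph. -/
noncomputable def jY (y : Y.E) : S.GE :=
  if h : y ∈ Y.contractedEdges {1} then Sum.inr (Sum.inl ⟨y, h⟩)
  else Sum.inr (Sum.inr (S.DY.eEquiv ⟨y, h⟩))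

theorem jX_surj (c : Γ.E) : S.jX (S.DX.eEquiv.symm c).1 = Sum.inr (Sum.inr c) := by
  rw [jX, dif_neg (S.DX.eEquiv.symm c).2]
  simp

theorem jY_surj (c : Γ.E) : S.jY (S.DY.eEquiv.symm c).1 = Sum.inr (Sum.inr c) := by
  rw [jY, dif_neg (S.DY.eEquiv.symm c).2]
  simp

theorem jX_inj : Function.Injective S.jX := by
  intro x x' h
  unfold jX at h
  split_ifs at h with h1 h2
  · exact Subtype.mk.inj (Sum.inl.inj h)
  · exact Subtype.mk.inj (S.DX.eEquiv.injective (Sum.inr.inj (Sum.inr.inj h)))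

theorem jY_inj : Function.Injective S.jY := by
  intro x x' h
  unfold jY at h
  split_ifs at h with h1 h2 h2
  · exact Subtype.mk.inj (Sum.inl.inj (Sum.inr.inj h))
  · cases h
  · cases h
  · exact Subtype.mk.inj (S.DY.eEquiv.injective (Sum.inr.inj (Sum.inr.inj h)))

/-- The glued graph is a gluing. -/
noncomputable def glue : GlueData S.Z X Y Γ {2} {1} (fun w => Γ.level w = 0) where
  DX := S.DX
  DY := S.DY
  p := fun z => z.1.1
  q := fun z => z.1.2
  comm := fun z => z.2
  pb := fun a b h => ⟨⟨(a, b), h⟩, rfl, rfl⟩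
  ext := fun z z' h1 h2 => Subtype.ext (Prod.ext h1 h2)
  injX := S.injX
  injY := S.injY
  cX := fun x hx => by
    rw [S.mX] at hx
    have := S.fX (X.src x)
    have := S.dX x
    omega
  cY := fun y hy => by
    rw [S.mY] at hy
    have := S.fY (Y.src y)
    omega
  jX := S.jX
  jY := S.jY
  jX_inj := S.jX_inj
  jY_inj := S.jY_inj
  kX := fun x => by
    change S.gkappa (S.jX x) = _
    unfold jX
    split_ifs with h
    · rfl
    · exact S.DX.kappa_map _
  kY := fun x => by
    change S.gkappa (S.jY x) = _
    unfold jY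
    split_ifs with h
    · rfl
    · exact S.DY.kappa_map _
  srcX := fun x => by
    change (S.gsrc (S.jX x)).1.1 = _
    unfold jX
    split_ifs with h
    · rfl
    · simp [gsrc]
  srcY := fun x => by
    change (S.gsrc (S.jY x)).1.2 = _
    unfold jY
    split_ifs with h
    · rfl
    · simp [gsrc]
  dstX := fun x => by
    change (S.gdst (S.jX x)).1.1 = _
    unfold jX
    split_ifs with h
    · rfl
    · simp [gdst]
  dstY := fun x => by
    change (S.gdst (S.jY x)).1.2 = _
    unfold jY
    split_ifs with h
    · rfl
    · simp [gdst]
  cover1 := fun e => by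
    rcases e with x | y | c
    · exact Or.inl ⟨x.1, by rw [jX, dif_pos x.2]⟩
    · exact Or.inr ⟨y.1, y.2, by rw [jY, dif_pos y.2]⟩
    · exact Or.inl ⟨_, S.jX_surj c⟩
  cover2 := fun e => by
    rcases e with x | y | c
    · exact Or.inr ⟨x.1, x.2, by rw [jX, dif_pos x.2]⟩
    · exact Or.inl ⟨y.1, by rw [jY, dif_pos y.2]⟩
    · exact Or.inl ⟨_, S.jY_surj c⟩
  disj1 := fun x y hy h => by
    unfold jX jY at h
    rw [dif_pos hy] at h
    split_ifs at h <;> cases h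
  disj2 := fun y x hx h => by
    unfold jX jY at h
    rw [dif_pos hx] at h
    split_ifs at h <;> cases h
  legX := fun i => rfl
  legY := fun i => rfl
  genP := fun z h => if_pos h
  genN := fun z h => if_neg h

theorem zlevel (z : S.Z.V) :
    (-1 ≤ X.level (S.glue.p z) ∧ Y.level (S.glue.q z) = 0 ∧
      Γ.level (S.DX.vmap (S.glue.p z)) = 0 ∧ S.Z.level z = X.level (S.glue.p z)) ∨
    (X.level (S.glue.p z) = -2 ∧ Y.level (S.glue.q z) ≤ -1 ∧
      Γ.level (S.DX.vmap (S.glue.p z)) = -1 ∧ S.Z.level z = Y.level (S.glue.q z) - 1) :=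
  S.glevel_cases z

theorem zX (x : X.E) : S.glue.p (S.Z.src (S.glue.jX x)) = X.src x ∧
    S.glue.p (S.Z.dst (S.glue.jX x)) = X.dst x := ⟨S.glue.srcX x, S.glue.dstX x⟩

theorem zY (x : Y.E) : S.glue.q (S.Z.src (S.glue.jY x)) = Y.src x ∧
    S.glue.q (S.Z.dst (S.glue.jY x)) = Y.dst x := ⟨S.glue.srcY x, S.glue.dstY x⟩

theorem hK1 (e : S.Z.E) : e ∈ S.Z.contractedEdges {1, 2} ↔
    ∃ y ∈ Y.contractedEdges {1}, S.glue.jY y = e := by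
  have l1 := S.zlevel (S.Z.src e)
  have l2 := S.zlevel (S.Z.dst e)
  have e1 : e ∈ S.Z.contractedEdges {1, 2} ↔ S.Z.level (S.Z.src e) ≤ -2 := by
    have h1 : S.Z.level (S.Z.dst e) < S.Z.level (S.Z.src e) := S.gcross e
    have h2 := S.Z.level_mem (S.Z.src e)
    simp only [mem_contracted, Finset.mem_insert, Finset.mem_singleton, forall_eq_or_imp,
      forall_eq, Crosses]
    push_cast
    constructor <;> intro h <;> omega
  rw [e1]
  constructor
  · intro h
    rcases S.glue.cover1 e with ⟨x, rfl⟩ | h'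
    · exfalso
      rw [(S.zX x).1] at l1
      rw [(S.zX x).2] at l2
      have := S.dX x
      have := S.lX (X.dst x)
      omega
    · exact h'
  · rintro ⟨y, hy, rfl⟩
    rw [S.mY] at hy
    rw [(S.zY y).1] at l1
    omega

theorem hK2 (e : S.Z.E) : e ∈ S.Z.contractedEdges {2, 3} ↔
    ∃ x ∈ X.contractedEdges {2}, S.glue.jX x = e := by
  have l1 := S.zlevel (S.Z.src e)
  have l2 := S.zlevel (S.Z.dst e)
  have e1 : e ∈ S.Z.contractedEdges {2, 3} ↔ -1 ≤ S.Z.level (S.Z.dst e) := by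
    have h1 : S.Z.level (S.Z.dst e) < S.Z.level (S.Z.src e) := S.gcross e
    have h2 := S.Z.level_mem (S.Z.src e)
    have h3 := S.Z.level_mem (S.Z.dst e)
    have h4 : S.Z.L = 3 := rfl
    rw [h4] at h3
    simp only [mem_contracted, Finset.mem_insert, Finset.mem_singleton, forall_eq_or_imp,
      forall_eq, Crosses]
    push_cast at h3 ⊢
    constructor <;> intro h <;> omega
  rw [e1]
  constructor
  · intro h
    rcases S.glue.cover2 e with ⟨y, rfl⟩ | h'
    · exfalso
      rw [(S.zY y).1] at l1
      rw [(S.zY y).2] at l2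
      have := S.dY y
      have := S.lY (Y.src y)
      omega
    · exact h'
  · rintro ⟨x, hx, rfl⟩
    rw [S.mX] at hx
    rw [(S.zX x).2] at l2
    omega

/-- Undegeneration of the glued graph to `X`. -/
noncomputable def toX : S.Z.UndegenData {1, 2} X :=
  S.glue.undegen S.hK1 (fun v => by
    have h1 := S.zlevel v
    have h2 := S.lX (S.glue.p v)
    simp only [Finset.filter_insert, Finset.filter_singleton]
    push_cast
    split_ifs <;> simp <;> omega) (by rw [S.hX]; rfl)

/-- Undegeneration of the glued graph to `Y`. -/
noncomputable def toY : S.Z.UndegenData {2, 3} Y :=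
  S.glue.symm.undegen S.hK2 (fun v => by
    have h1 := S.zlevel v
    have h2 := S.lY (S.glue.q v)
    change Y.level (S.glue.q v) = _
    simp only [Finset.filter_insert, Finset.filter_singleton]
    push_cast
    split_ifs <;> simp <;> omega) (by rw [S.hY]; rfl)

theorem connected (hc : X.Connected) : S.Z.Connected := by
  obtain ⟨⟨a⟩, h⟩ := hc
  refine ⟨⟨S.overX a⟩, fun z z' => ?_⟩
  have key : Relation.ReflTransGen (S.Z.StepBy (fun _ => True)) z z' := by
    refine lift_reach (A := fun _ => True) (good := fun _ => True) S.glue.p ?_ ?_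
      (fun _ _ => ⟨trivial, trivial⟩) trivial
      (Relation.ReflTransGen.mono ?_ _ _ (h (S.glue.p z) (S.glue.p z'))) z z' rfl rfl
    · intro u w huw _
      refine reflTransGen_of_eqvGen ?_ (fun _ _ h => h.symm) ((S.toX.fiber_eq u w).1 huw)
      rintro x y ⟨e, _, hc⟩
      exact ⟨e, trivial, hc⟩
    · intro x _
      exact ⟨S.glue.jX x, trivial, S.zX x⟩
    · rintro x y ⟨e, hc⟩
      exact ⟨e, trivial, hc⟩
  refine Relation.ReflTransGen.mono ?_ _ _ key
  rintro x y ⟨e, _, hc⟩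
  exact ⟨e, hc⟩

theorem connects_ne {e : S.Z.E} {z z' : S.Z.V} (h : S.Z.Connects e z z') : z ≠ z' := by
  have h1 : S.Z.level (S.Z.dst e) < S.Z.level (S.Z.src e) := S.gcross e
  rcases h with ⟨rfl, rfl⟩ | ⟨rfl, rfl⟩ <;> intro hh <;> rw [hh] at h1 <;>
    exact lt_irrefl _ h1

theorem cycleX (z : S.Z.V) (hz : Γ.level (S.DX.vmap (S.glue.p z)) = 0)
    (h : X.HasHighCycleAt (S.glue.p z)) : S.Z.HasHighCycleAt z := by
  obtain ⟨e, u, hc, hl, hr⟩ := cycle_to_reach h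
  have hzl := S.zlevel z
  obtain ⟨t, rfl⟩ := S.glue.p_surj u
  have hct : S.Z.Connects (S.glue.jX e) z t := by
    have hlu := ((level_dst_of_connects hc).1 hl).2
    have ht := S.zlevel t
    have uniq : ∀ s t : S.Z.V, -1 ≤ X.level (S.glue.p t) → S.glue.p s = S.glue.p t → s = t := by
      intro s t h1 h2
      have := S.zlevel t
      refine (S.glue.eq_of_p ?_ h2.symm).symm
      change Γ.level (S.DX.vmap (S.glue.p t)) = 0
      omega
    rcases hc with ⟨h1, h2⟩ | ⟨h1, h2⟩
    · refine Or.inl ⟨uniq _ _ ?_ ?_, uniq _ _ ?_ ?_⟩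
      · omega
      · rw [(S.zX e).1, h1]
      · omega
      · rw [(S.zX e).2, h2]
    · refine Or.inr ⟨uniq _ _ ?_ ?_, uniq _ _ ?_ ?_⟩
      · omega
      · rw [(S.zX e).1, h1]
      · omega
      · rw [(S.zX e).2, h2]
  refine reach_to_cycle (S.connects_ne hct) hct ?_
  refine lift_reach (good := fun u => X.level (S.glue.p z) ≤ X.level u) S.glue.p ?_ ?_ ?_
    le_rfl hr z t rfl rfl
  · intro a b hab hg
    have := S.zlevel a
    rw [S.glue.eq_of_p (z := a) (z' := b) (by
      change Γ.level (S.DX.vmap (S.glue.p a)) = 0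
      omega) hab]
  · rintro x ⟨hx, hlx⟩
    refine ⟨S.glue.jX x, ⟨fun hh => hx (S.glue.jX_inj hh), ?_⟩, S.zX x⟩
    have := S.zlevel (S.Z.dst (S.glue.jX x))
    rw [(S.zX x).2] at this
    omega
  · rintro x ⟨_, hlx⟩
    exact ⟨hlx.trans (X.level_mono x), hlx⟩

theorem cycleY (z : S.Z.V) (hz : ¬ Γ.level (S.DX.vmap (S.glue.p z)) = 0)
    (h : Y.HasHighCycleAt (S.glue.q z)) : S.Z.HasHighCycleAt z := by
  obtain ⟨e, u, hc, hl, hr⟩ := cycle_to_reach h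
  have hzl := S.zlevel z
  -- the edge `e` lifts to an edge at `z`
  obtain ⟨t, hct, htu⟩ : ∃ t, S.Z.Connects (S.glue.jY e) z t ∧ S.glue.q t = u := by
    have uniq : ∀ s : S.Z.V, S.glue.q s = S.glue.q z → s = z := by
      intro s h2
      refine (S.glue.symm.eq_of_p (z := z) (z' := s) ?_ h2.symm).symm
      change ¬ Γ.level (S.DY.vmap (S.glue.q z)) = 0
      have := S.glue.comm z
      change S.DX.vmap (S.glue.p z) = S.DY.vmap (S.glue.q z) at this
      rwa [← this]
    rcases hc with ⟨h1, h2⟩ | ⟨h1, h2⟩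
    · exact ⟨S.Z.dst (S.glue.jY e), Or.inl ⟨uniq _ (by rw [(S.zY e).1, h1]), rfl⟩,
        by rw [(S.zY e).2, h2]⟩
    · exact ⟨S.Z.src (S.glue.jY e), Or.inr ⟨rfl, uniq _ (by rw [(S.zY e).2, h2])⟩,
        by rw [(S.zY e).1, h1]⟩
  refine reach_to_cycle (S.connects_ne hct) hct ?_
  refine lift_reach (good := fun _ => True) S.glue.q ?_ ?_ (fun _ _ => ⟨trivial, trivial⟩)
    trivial hr z t rfl htu
  · intro a b hab _
    refine reflTransGen_of_eqvGen ?_ (fun _ _ h => h.symm) ((S.toY.fiber_eq a b).1 hab)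
    rintro s s' ⟨f, hf, hc⟩
    obtain ⟨x, hx, rfl⟩ := (S.hK2 f).1 hf
    refine ⟨_, ⟨?_, ?_⟩, hc⟩
    · exact (S.glue.disj2 e x hx).symm
    · rw [S.mX] at hx
      have := S.zlevel (S.Z.dst (S.glue.jX x))
      rw [(S.zX x).2] at this
      omega
  · rintro x ⟨hx, hlx⟩
    refine ⟨S.glue.jY x, ⟨fun hh => hx (S.glue.jY_inj hh), ?_⟩, S.zY x⟩
    have := S.zlevel (S.Z.dst (S.glue.jY x))
    rw [(S.zY x).2] at this
    omega

theorem realizable (hX : X.Realizable) (hY : Y.Realizable) : S.Z.Realizable := by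
  obtain ⟨cX, sX, aX, _, iX⟩ := hX
  obtain ⟨_, sY, aY, _, iY⟩ := hY
  have tr : ∀ z, (Γ.level (S.DX.vmap (S.glue.p z)) = 0) ∨
      (¬ Γ.level (S.DX.vmap (S.glue.p z)) = 0) := fun z => em _
  have locY : ∀ z, ¬ Γ.level (S.DX.vmap (S.glue.p z)) = 0 →
      S.Z.deg z = Y.deg (S.glue.q z) ∧ S.Z.numLegsAt z = Y.numLegsAt (S.glue.q z) ∧
      S.Z.numHalfEdgesAt z = Y.numHalfEdgesAt (S.glue.q z) ∧
      S.Z.poleOrders z = Y.poleOrders (S.glue.q z) := by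
    intro z hz
    refine S.glue.symm.local_eq z ?_
    change ¬ Γ.level (S.DY.vmap (S.glue.q z)) = 0
    have := S.glue.comm z
    change S.DX.vmap (S.glue.p z) = S.DY.vmap (S.glue.q z) at this
    rwa [← this]
  refine ⟨S.connected cX, ?_, ?_, fun e => (S.gcross e).ne', ?_⟩
  · intro z
    rcases tr z with hz | hz
    · obtain ⟨h1, h2, h3, h4⟩ := S.glue.local_eq z hz
      rw [h2, h3, S.glue.genP z hz]
      exact sX _
    · obtain ⟨h1, h2, h3, h4⟩ := locY z hz
      rw [h2, h3, S.glue.genN z hz]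
      exact sY _
  · intro z
    rcases tr z with hz | hz
    · obtain ⟨h1, h2, h3, h4⟩ := S.glue.local_eq z hz
      rw [h1, S.glue.genP z hz]
      exact aX _
    · obtain ⟨h1, h2, h3, h4⟩ := locY z hz
      rw [h1, S.glue.genN z hz]
      exact aY _
  · intro z hinc
    rcases tr z with hz | hz
    · obtain ⟨h1, h2, h3, h4⟩ := S.glue.local_eq z hz
      unfold Inconvenient at hinc
      rw [h4, S.glue.genP z hz] at hinc
      exact S.cycleX z hz (iX _ hinc)
    · obtain ⟨h1, h2, h3, h4⟩ := locY z hz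
      unfold Inconvenient at hinc
      rw [h4, S.glue.genN z hz] at hinc
      exact S.cycleY z hz (iY _ hinc)

end GPair

end Glue

end ELG

/-- if the profiles `(Γ₁, Γ₂)` and `(Γ₂, Γ₃)` are non-empty, then
so is the profile `(Γ₁, Γ₂, Γ₃)`. -/
theorem profile_triple_nonempty (n : ℕ) (μ : Fin n → ℤ) (hμ : ∀ i, 0 ≤ μ i)
    (Γ₁ Γ₂ Γ₃ : ELG n μ)
    (h₁ : Γ₁.Realizable) (hL₁ : Γ₁.L = 1)
    (h₂ : Γ₂.Realizable) (hL₂ : Γ₂.L = 1)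
    (h₃ : Γ₃.Realizable) (hL₃ : Γ₃.L = 1)
    (h12 : ProfileNonEmpty ![Γ₁, Γ₂]) (h23 : ProfileNonEmpty ![Γ₂, Γ₃]) :
    ProfileNonEmpty ![Γ₁, Γ₂, Γ₃] := by
  obtain ⟨X, rX, lX, uX⟩ := h12
  obtain ⟨Y, rY, lY, uY⟩ := h23
  obtain ⟨D1⟩ : X.IsUndegenOf {1} Γ₁ := uX 0
  obtain ⟨D2⟩ : X.IsUndegenOf {2} Γ₂ := uX 1
  obtain ⟨D2'⟩ : Y.IsUndegenOf {1} Γ₂ := uY 0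
  obtain ⟨D3⟩ : Y.IsUndegenOf {2} Γ₃ := uY 1
  let S : GPair X Y Γ₂ := ⟨lX, lY, rX.2.2.2.1, rY.2.2.2.1, D2, D2'⟩
  have g1 : S.Z.IsUndegenOf {1} Γ₁ := by
    refine undegen_comp S.toX D1 (by simp) (fun v => ?_)
    change X.level (S.glue.p v) ≤ _ ↔ _
    have := S.zlevel v
    push_cast
    omega
  have g2 : S.Z.IsUndegenOf {2} Γ₂ := by
    refine undegen_comp S.toX D2 (by simp) (fun v => ?_)
    change X.level (S.glue.p v) ≤ _ ↔ _
    have := S.zlevel v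
    push_cast
    omega
  have g3 : S.Z.IsUndegenOf {3} Γ₃ := by
    refine undegen_comp S.toY D3 (by simp) (fun v => ?_)
    change Y.level (S.glue.q v) ≤ _ ↔ _
    have := S.zlevel v
    push_cast
    omega
  refine ⟨S.Z, S.realizable rX rY, rfl, fun i => ?_⟩
  fin_cases i
  · exact g1
  · exact g2
  · exact g3
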